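/- Let μ be a probability measure on ℝ with μ((−∞,0]) = 0 such that C := ∫₀^∞ x^{−1} dμ(x) < ∞, and let μ̃ be the probability measure on ℝ with density x ↦ 1/(C x) with respect to μ. Then for every r ≥ 0, the Polya kernel satisfies k_μ(r) = μ((r, ∞)) − C · r · μ̃((r, ∞)); equivalently, k_μ(r) = (1 − F(r)) − C r (1 − F̃(r)), where F and F̃ are the cumulative distribution functions of μ and μ̃. -/

import Mathlib

open MeasureTheory

/-!
On the half-line `x > |r|` the triangular function `max 0 (1 - |r| / x)` equals `1 - |r| * x⁻¹`, and
it vanishes for `0 < x ≤ |r|`. Integrating the two summands separately gives `μ (|r|, ∞)` and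
`|r| * ∫ x in (|r|, ∞), x⁻¹ ∂μ`; the latter integral is, up to the normalization `C`, the mass which
the measure with density `1 / (C x)` gives to `(|r|, ∞)`.
-/

open Set

/-- The Polya kernel `k_μ`: the mixture under `μ` of the triangular functions `max 0 (1 - |r| / x)`.
The integral runs over `x > 0`, so that `μ` itself need not be carried by the positive half-line. -/
noncomputable def polyaKernel (μ : Measure ℝ) (r : ℝ) : ℝ :=
  ∫ x in Ioi (0 : ℝ), max 0 (1 - |r| / x) ∂μ

/-- The inverse moment of `μ` over the positive half-line, the constant `C` of the paper. It is `0`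
by convention when `x⁻¹` is not integrable there. -/
noncomputable def inverseMoment (μ : Measure ℝ) : ℝ :=
  ∫ x in Ioi (0 : ℝ), x⁻¹ ∂μ

/-- The measure `μ̃` of the paper, with density `1 / (C x)` with respect to `μ`, where `C` is the
inverse moment of `μ`. Since `ENNReal.ofReal` truncates at `0`, the negative half-line gets no mass
from it. -/
noncomputable def inverseTilt (μ : Measure ℝ) : Measure ℝ :=
  μ.withDensity fun x => ENNReal.ofReal ((inverseMoment μ * x)⁻¹)

theorem setIntegral_mul_withDensity_div_setIntegral_real {α : Type*} [MeasurableSpace α]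
    {μ : Measure α} {f : α → ℝ} {s t : Set α} (hs : MeasurableSet s) (ht : MeasurableSet t)
    (hst : s ⊆ t) (hf : IntegrableOn f t μ) (hf_nonneg : ∀ x ∈ t, 0 ≤ f x) :
    (∫ x in t, f x ∂μ) *
        (μ.withDensity fun x => ENNReal.ofReal (f x / ∫ y in t, f y ∂μ)).real s =
      ∫ x in s, f x ∂μ := by
  set c := ∫ x in t, f x ∂μ
  have c_nonneg : 0 ≤ c := setIntegral_nonneg ht hf_nonneg
  have mass_eq : (μ.withDensity fun x => ENNReal.ofReal (f x / c)).real s =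
      (∫ x in s, f x ∂μ) / c := by
    rw [measureReal_def, withDensity_apply _ hs, ← integral_div,
      integral_eq_lintegral_of_nonneg_ae]
    · filter_upwards [ae_restrict_mem hs] with x hx
      exact div_nonneg (hf_nonneg x (hst hx)) c_nonneg
    · exact ((hf.mono_set hst).div_const c).aestronglyMeasurable
  have integral_le : ∫ x in s, f x ∂μ ≤ c :=
    setIntegral_mono_set hf (ae_restrict_of_forall_mem ht hf_nonneg) hst.eventuallyLE
  have integral_nonneg : 0 ≤ ∫ x in s, f x ∂μ :=
    setIntegral_nonneg hs fun x hx => hf_nonneg x (hst hx)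
  rw [mass_eq]
  exact mul_div_cancel_of_imp' fun c_eq_zero =>
    le_antisymm (integral_le.trans_eq c_eq_zero) integral_nonneg

theorem max_zero_one_sub_div_eq_indicator {a x : ℝ} (hx : 0 < x) :
    max 0 (1 - a / x) = (Ioi a).indicator (fun y => 1 - a * y⁻¹) x := by
  rw [div_eq_mul_inv]
  by_cases hax : a < x
  · rw [indicator_of_mem (mem_Ioi.2 hax), max_eq_right]
    exact sub_nonneg.2 (mul_inv_le_one_of_le₀ hax.le hx.le)
  · rw [indicator_of_notMem (notMem_Ioi.2 (not_lt.1 hax)), max_eq_left]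
    rw [sub_nonpos, ← div_eq_mul_inv, one_le_div hx]
    exact not_lt.1 hax

theorem polyaKernel_eq_setIntegral (μ : Measure ℝ) (r : ℝ) :
    polyaKernel μ r = ∫ x in Ioi |r|, (1 - |r| * x⁻¹) ∂μ :=
  calc
    polyaKernel μ r = ∫ x in Ioi 0, (Ioi |r|).indicator (fun y => 1 - |r| * y⁻¹) x ∂μ :=
      setIntegral_congr_fun measurableSet_Ioi fun _ hx => max_zero_one_sub_div_eq_indicator hx
    _ = ∫ x in Ioi |r|, (1 - |r| * x⁻¹) ∂μ := by
      rw [setIntegral_indicator measurableSet_Ioi,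
        inter_eq_right.2 (Ioi_subset_Ioi (abs_nonneg r))]

theorem polyaKernel_eq_real_Ioi_sub {μ : Measure ℝ} [IsFiniteMeasure μ]
    (h_inv : IntegrableOn (fun x : ℝ => x⁻¹) (Ioi 0) μ) (r : ℝ) :
    polyaKernel μ r = μ.real (Ioi |r|) - |r| * ∫ x in Ioi |r|, x⁻¹ ∂μ := by
  have inv_integrable : IntegrableOn (fun x : ℝ => x⁻¹) (Ioi |r|) μ :=
    h_inv.mono_set (Ioi_subset_Ioi (abs_nonneg r))
  rw [polyaKernel_eq_setIntegral,
    integral_sub (integrable_const 1) (inv_integrable.const_mul |r|), integral_const_mul,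
    setIntegral_const, smul_eq_mul, mul_one]

theorem inverseMoment_mul_inverseTilt_real {μ : Measure ℝ}
    (h_inv : IntegrableOn (fun x : ℝ => x⁻¹) (Ioi 0) μ) {s : Set ℝ} (hs : MeasurableSet s)
    (hs_pos : s ⊆ Ioi 0) :
    inverseMoment μ * (inverseTilt μ).real s = ∫ x in s, x⁻¹ ∂μ := by
  have tilt_eq : inverseTilt μ =
      μ.withDensity fun x => ENNReal.ofReal (x⁻¹ / inverseMoment μ) := by
    simp only [inverseTilt, mul_inv_rev, div_eq_mul_inv]
  rw [tilt_eq]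
  exact setIntegral_mul_withDensity_div_setIntegral_real hs measurableSet_Ioi hs_pos h_inv
    fun x hx => (inv_pos.2 hx).le

theorem polya_kernel_special_case_cdf_general (μ : Measure ℝ) [IsFiniteMeasure μ]
    (h_inv : IntegrableOn (fun x : ℝ => x⁻¹) (Ioi 0) μ) (r : ℝ) :
    polyaKernel μ r =
      μ.real (Ioi |r|) - inverseMoment μ * |r| * (inverseTilt μ).real (Ioi |r|) := by
  rw [polyaKernel_eq_real_Ioi_sub h_inv, mul_right_comm,
    inverseMoment_mul_inverseTilt_real h_inv measurableSet_Ioi (Ioi_subset_Ioi (abs_nonneg r)),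
    mul_comm |r|]

/-- First claim of Theorem 2.3: if `C = ∫₀^∞ x⁻¹ dμ(x) < ∞` and `μ̃` has density
`1/(C x)` with respect to `μ`, then for `r ≥ 0`,
`k_μ(r) = μ((r,∞)) - C r μ̃((r,∞))`, i.e. `k_μ(r) = (1 - F(r)) - C r (1 - F̃(r))`. -/
theorem polya_kernel_special_case_cdf (μ : Measure ℝ) [IsProbabilityMeasure μ]
    (hμ : μ (Set.Iic 0) = 0)
    (hC : Integrable (fun x : ℝ => x⁻¹) μ)
    (C : ℝ) (hCdef : C = ∫ x in Set.Ioi (0 : ℝ), x⁻¹ ∂μ)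
    (μtilde : Measure ℝ)
    (hμtilde : μtilde = μ.withDensity (fun x => ENNReal.ofReal ((C * x)⁻¹)))
    (k : ℝ → ℝ)
    (hk : ∀ r : ℝ, k r = ∫ x in Set.Ioi (0 : ℝ), max 0 (1 - |r| / x) ∂μ)
    (r : ℝ) (hr : 0 ≤ r) :
    k r = (μ (Set.Ioi r)).toReal - C * r * (μtilde (Set.Ioi r)).toReal := by
  subst hCdef hμtilde
  have kernel_eq := polya_kernel_special_case_cdf_general μ hC.integrableOn r
  rw [abs_of_nonneg hr] at kernel_eq
  exact (hk r).trans kernel_eq
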